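/- Fix integers q > 2, t ≥ 1, and a real ε > 0. There exists n_0 such that for every n ≥ n_0 there exist an integer m with m − (n−1) ≤ (log_2 n + (8+ε)·log_2 log_2 n)/log_2 q and an injective map E : Σ_q^{n−1} → Σ_q^m such that the code C = E(Σ_q^{n−1}) ⊆ Σ_q^m corrects any burst of at most t deletions, i.e., for all z, z' ∈ C with B_{≤t}(z) ∩ B_{≤t}(z') ≠ ∅ one has z = z'. In particular, there exist q-ary codes correcting a burst of at most t deletions with redundancy at most log_2 n + 8·log_2 log_2 n + o(log_2 log_2 n) + γ_{q,t} bits, where γ_{q,t} is a constant depending only on q and t. -/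

import Mathlib

/-!
Only the existence of a code `C ⊆ Σ_q^m` with `|C| ≥ q^(n-1)` is needed, so the code is obtained by
pigeonhole: a large set of words is divided into few classes, each of which corrects bursts.

If two words of length `m` have a common result of a burst of `s ≤ t` deletions, at position `i`
in `x` and at `j ≥ i` in `x'`, then `x'` arises from `x` by moving the factor between `i` and `j`
to the left by `s`; outside the window `[i, j + s)` the words agree. The classes are given by four
invariants.

* Consider the occurrences of the marker `1 0^t`. They are more than `t` apart, and in at least
  half of all words every window of length `δ = O((log n)^2)` holds one (`card_dense`). The number
  of markers modulo `4 t + 1` and the sum of their positions modulo `O(m)` force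
  `j + s - i ≤ P = O(δ)` for such words (`localize`).
* Blocks of length `2 P` are coloured greedily with `O(P^2)` colours so that confusable blocks get
  different colours (`exists_block_colouring`). The sums of the colours over the two partitions of
  the positions into blocks, with offsets `0` and `P`, determine `x` once the window has length at
  most `P`, since the window lies in one block of one of the partitions (`eq_of_colSum`).

There are `O(m P^4) = O(n (log n)^8)` classes, which is below `q^r / 2` for
`r = ⌊(log n + (8 + ε) log log n) / log q⌋` and `n` large (`numClasses_le`,
`eventually_redundancy`); so some class of words of length `n - 1 + r` has at least `q^(n-1)`
elements (`exists_code`).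
-/

/-- `burst t' x` is the set `B_{t'}(x)` of strings obtained from `x` by
deleting `t'` consecutive symbols. -/
def burst (t' : ℕ) (x : List ℕ) : Set (List ℕ) :=
  {y | ∃ i, i + t' ≤ x.length ∧ y = x.take i ++ x.drop (i + t')}

/-- `burstLe t x` is the set `B_{≤t}(x) = ∪_{t'=0}^{t} B_{t'}(x)`. -/
def burstLe (t : ℕ) (x : List ℕ) : Set (List ℕ) :=
  {y | ∃ t' ≤ t, y ∈ burst t' x}

namespace BurstCode

/-! ### Markers and localization of the burst -/

/-- The infinite word `z` with the factor of length `s` starting at position `i` removed. -/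
def del {A : Type*} (z : ℕ → A) (i s p : ℕ) : A := if p < i then z p else z (p + s)

/-- The marker `e o^t` (one symbol `e` followed by `t` symbols `o`) occurs in `z` at position
`p`. -/
def IsMark {A : Type*} (o e : A) (t : ℕ) (z : ℕ → A) (p : ℕ) : Prop :=
  z p = e ∧ ∀ k, 1 ≤ k → k ≤ t → z (p + k) = o

open Classical in
/-- Indicator function of the marker positions, with integer values. -/
noncomputable def mark {A : Type*} (o e : A) (t : ℕ) (z : ℕ → A) (p : ℕ) : ℤ :=
  if IsMark o e t z p then 1 else 0

lemma mark_nonneg {A : Type*} (o e : A) (t : ℕ) (z : ℕ → A) (p : ℕ) : 0 ≤ mark o e t z p := by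
  unfold mark; split_ifs <;> simp

lemma mark_le_one {A : Type*} (o e : A) (t : ℕ) (z : ℕ → A) (p : ℕ) : mark o e t z p ≤ 1 := by
  unfold mark; split_ifs <;> simp

lemma mark_congr {A : Type*} {o e : A} {t : ℕ} {z z' : ℕ → A} {p p' : ℕ}
    (h : ∀ k ≤ t, z (p + k) = z' (p' + k)) : mark o e t z p = mark o e t z' p' := by
  have : IsMark o e t z p ↔ IsMark o e t z' p' := by
    unfold IsMark
    have h0 := h 0 (Nat.zero_le _)
    simp only [add_zero] at h0
    rw [h0]
    refine and_congr_right fun _ => forall_congr' fun k => forall_congr' fun _ =>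
      forall_congr' fun hk => ?_
    rw [h k hk]
  classical
  exact if_congr this rfl rfl

/-- Two occurrences of the marker are more than `t` apart. -/
lemma mark_spacing {A : Type*} {o e : A} (hoe : o ≠ e) (t : ℕ) (z : ℕ → A) (a b : ℕ)
    (hab : a ≤ b) :
    ((t : ℤ) + 1) * ∑ p ∈ Finset.Ico a b, mark o e t z p ≤ (b : ℤ) - a + t := by
  classical
  have h1 : ∑ p ∈ Finset.Ico a b, mark o e t z p
      = (((Finset.Ico a b).filter (IsMark o e t z)).card : ℤ) := by
    unfold mark
    rw [Finset.sum_boole]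
  set S := (Finset.Ico a b).filter (IsMark o e t z) with hS
  have h2 : (S ×ˢ Finset.range (t + 1)).card ≤ (Finset.Ico a (b + t)).card := by
    refine Finset.card_le_card_of_injOn (fun x => x.1 + x.2) ?_ ?_
    · rintro ⟨p, k⟩ h
      simp [hS] at h ⊢
      omega
    · -- an overlap would put `e` and `o` at the same position
      have key : ∀ p p' k k' : ℕ, IsMark o e t z p → IsMark o e t z p' → k ≤ t →
          p + k = p' + k' → ¬ p < p' := by
        intro p p' k k' hp hp' hk h hlt
        have := hp.2 (p' - p) (by omega) (by omega)
        rw [Nat.add_sub_cancel' hlt.le, hp'.1] at this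
        exact hoe this.symm
      rintro ⟨p, k⟩ h ⟨p', k'⟩ h' hh
      simp [hS] at h h' hh
      have := key p p' k k' h.1.2 h'.1.2 (by omega) hh
      have := key p' p k' k h'.1.2 h.1.2 (by omega) hh.symm
      ext <;> simp <;> omega
  rw [Finset.card_product, Finset.card_range, Nat.card_Ico] at h2
  rw [h1]
  have h3 : S.card * (t + 1) + a ≤ b + t := by omega
  zify at h3
  linarith

/-- If every window of length `δ` inside `[0, m)` holds a marker, a window of length at least
`c * δ` holds at least `c` of them. -/
lemma mark_dense {A : Type*} {o e : A} {t : ℕ} {z : ℕ → A} {m δ : ℕ}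
    (hd : ∀ a, a + δ ≤ m → ∃ p, a ≤ p ∧ p < a + δ ∧ IsMark o e t z p) (c a b : ℕ)
    (hab : a + c * δ ≤ b) (hb : b ≤ m) : (c : ℤ) ≤ ∑ p ∈ Finset.Ico a b, mark o e t z p := by
  induction c generalizing a with
  | zero => simpa using Finset.sum_nonneg fun p _ => mark_nonneg o e t z p
  | succ c ih =>
    have h1 : (c + 1) * δ = c * δ + δ := by ring
    obtain ⟨p, hp1, hp2, hp⟩ := hd a (by omega)
    rw [← Finset.sum_Ico_consecutive _ (show a ≤ a + δ by omega) (show a + δ ≤ b by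
      have := Nat.zero_le (c * δ); omega)]
    have h2 := ih (a + δ) (by omega)
    have h3 : mark o e t z p ≤ ∑ p ∈ Finset.Ico a (a + δ), mark o e t z p :=
      Finset.single_le_sum (f := mark o e t z) (fun p _ => mark_nonneg o e t z p)
        (by simp; omega)
    have h4 : mark o e t z p = 1 := by simp [mark, hp]
    push_cast
    linarith

/-- Change of a weighted sum when the segment `[i + s, j - t + s)` of `f` is moved left by `s`
positions. Only terms near the two ends and the moved terms contribute. -/
lemma weighted_diff (φ f f' : ℕ → ℤ) (t i j s m : ℕ) (hij : i + t ≤ j) (hjm : j + s ≤ m)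
    (h1 : ∀ p, p + t < i → f' p = f p) (h2 : ∀ p, i ≤ p → p + t < j → f' p = f (p + s))
    (h3 : ∀ p, j + s ≤ p → f' p = f p) :
    ∑ p ∈ Finset.range m, φ p * f' p - ∑ p ∈ Finset.range m, φ p * f p =
      (∑ p ∈ Finset.Ico (i - t) i, φ p * f' p - ∑ p ∈ Finset.Ico (i - t) (i + s), φ p * f p)
      + ∑ p ∈ Finset.Ico i (j - t), (φ p - φ (p + s)) * f (p + s)
      + (∑ p ∈ Finset.Ico (j - t) (j + s), φ p * f' p
        - ∑ p ∈ Finset.Ico (j - t + s) (j + s), φ p * f p) := by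
  have split : ∀ (g : ℕ → ℤ) (a b c d : ℕ), a ≤ b → b ≤ c → c ≤ d → d ≤ m →
      ∑ p ∈ Finset.range m, g p = ∑ p ∈ Finset.Ico 0 a, g p + ∑ p ∈ Finset.Ico a b, g p
        + ∑ p ∈ Finset.Ico b c, g p + ∑ p ∈ Finset.Ico c d, g p + ∑ p ∈ Finset.Ico d m, g p := by
    intro g a b c d h1 h2 h3 h4
    rw [Finset.range_eq_Ico, Finset.sum_Ico_consecutive _ (Nat.zero_le _) h1,
      Finset.sum_Ico_consecutive _ (by omega) h2, Finset.sum_Ico_consecutive _ (by omega) h3,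
      Finset.sum_Ico_consecutive _ (by omega) h4]
  rw [split (fun p => φ p * f' p) (i - t) i (j - t) (j + s) (by omega) (by omega) (by omega) hjm,
    split (fun p => φ p * f p) (i - t) (i + s) (j - t + s) (j + s) (by omega) (by omega)
      (by omega) hjm]
  have e1 : ∑ p ∈ Finset.Ico 0 (i - t), φ p * f' p = ∑ p ∈ Finset.Ico 0 (i - t), φ p * f p := by
    refine Finset.sum_congr rfl fun p hp => ?_
    simp at hp
    rw [h1 p (by omega)]
  have e3 : ∑ p ∈ Finset.Ico (j + s) m, φ p * f' p = ∑ p ∈ Finset.Ico (j + s) m, φ p * f p := by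
    refine Finset.sum_congr rfl fun p hp => ?_
    simp at hp
    rw [h3 p (by omega)]
  have e2 : ∑ p ∈ Finset.Ico i (j - t), φ p * f' p
      = ∑ p ∈ Finset.Ico i (j - t), φ p * f (p + s) := by
    refine Finset.sum_congr rfl fun p hp => ?_
    simp at hp
    rw [h2 p (by omega) (by omega)]
  have e4 : ∑ p ∈ Finset.Ico (i + s) (j - t + s), φ p * f p
      = ∑ p ∈ Finset.Ico i (j - t), φ (p + s) * f (p + s) := by
    rw [Finset.sum_Ico_add' (fun p => φ p * f p)]
  rw [e1, e3, e2, e4]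
  simp only [sub_mul, Finset.sum_sub_distrib]
  ring

/-- On an interval within distance `t` of `x`, the first moment of a `[0,1]`-valued `f` is `x`
times its mass up to an error `t` per position. -/
lemma moment_bound (f : ℕ → ℤ) (h0 : ∀ p, 0 ≤ f p) (h1 : ∀ p, f p ≤ 1) (x : ℤ) (t a b : ℕ)
    (hx : ∀ p : ℕ, a ≤ p → p < b → |(p : ℤ) - x| ≤ t) :
    |∑ p ∈ Finset.Ico a b, (p : ℤ) * f p - x * ∑ p ∈ Finset.Ico a b, f p|
      ≤ ((b - a : ℕ) : ℤ) * t := by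
  rw [Finset.mul_sum, ← Finset.sum_sub_distrib]
  refine (Finset.abs_sum_le_sum_abs _ _).trans ?_
  calc _ ≤ ∑ p ∈ Finset.Ico a b, (t : ℤ) := by
        refine Finset.sum_le_sum fun p hp => ?_
        simp at hp
        rw [← sub_mul, abs_mul, abs_of_nonneg (h0 p)]
        nlinarith [hx p hp.1 hp.2, h0 p, h1 p, abs_nonneg ((p : ℤ) - x)]
    _ = _ := by simp

lemma sum_bound (f : ℕ → ℤ) (h0 : ∀ p, 0 ≤ f p) (h1 : ∀ p, f p ≤ 1) (a b : ℕ) :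
    0 ≤ ∑ p ∈ Finset.Ico a b, f p ∧ ∑ p ∈ Finset.Ico a b, f p ≤ ((b - a : ℕ) : ℤ) := by
  refine ⟨Finset.sum_nonneg fun p _ => h0 p, ?_⟩
  calc _ ≤ ∑ p ∈ Finset.Ico a b, (1 : ℤ) := Finset.sum_le_sum fun p _ => h1 p
    _ = _ := by simp


set_option maxHeartbeats 1000000 in
/-- Localization: let `z` and `z'` agree after removing `s` symbols at `i` and at `j`
respectively. If their marker counts agree modulo `4 t + 1` and the sums of their marker
positions agree modulo a suitable linear function of `m`, then `j - i` is at most a constant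
times the density parameter `δ`.

The count forces the net numbers of markers gained near `j` and lost near `i` to be the same
integer `c`, and the sum of positions changes by `c (j - i) - s N + O(1)`, where `N` is the
number of markers moved. Since `s N` is at most about `t / (t + 1) * (j - i)`, this can only
vanish for large `j - i` if `c = 0`, and then `N` is bounded. -/
lemma localize {A : Type*} {o e : A} (hoe : o ≠ e) {t : ℕ} {z z' : ℕ → A} {m δ i j s : ℕ}
    (hδ : 1 ≤ δ) (hs : 1 ≤ s) (hst : s ≤ t) (hij : i ≤ j) (hjm : j + s ≤ m)
    (hdel : ∀ p, del z i s p = del z' j s p)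
    (hd : ∀ a, a + δ ≤ m → ∃ p, a ≤ p ∧ p < a + δ ∧ IsMark o e t z p)
    (hcount : (4 * (t : ℤ) + 1) ∣
      ∑ p ∈ Finset.range m, mark o e t z' p - ∑ p ∈ Finset.range m, mark o e t z p)
    (hsum : (3 * (t : ℤ) * m + 6 * t ^ 2 + 1) ∣
      ∑ p ∈ Finset.range m, (p : ℤ) * mark o e t z' p
        - ∑ p ∈ Finset.range m, (p : ℤ) * mark o e t z p) :
    j + s - i ≤ 20 * (t + 1) ^ 3 * δ := by
  have hbig : ∀ x : ℕ, x ≤ 20 * (t + 1) ^ 3 → x ≤ 20 * (t + 1) ^ 3 * δ :=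
    fun x hx => hx.trans (Nat.le_mul_of_pos_right _ hδ)
  rcases Nat.lt_or_ge j (i + t) with hlt | hge
  · apply hbig
    nlinarith [show j + s - i ≤ 2 * t by omega, sq_nonneg t, Nat.zero_le (t ^ 3)]
  have e1 : ∀ p, p < i → z' p = z p := by
    intro p hp
    have := hdel p
    simp only [del, hp, if_true, show p < j by omega] at this
    exact this.symm
  have e2 : ∀ p, i ≤ p → p < j → z' p = z (p + s) := by
    intro p hp hp'
    have := hdel p
    simp only [del, hp', if_true, show ¬ p < i by omega, if_false] at this
    exact this.symm
  have e3 : ∀ p, j + s ≤ p → z' p = z p := by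
    intro p hp
    have := hdel (p - s)
    simp only [del, show ¬ (p - s < i) by omega, show ¬ (p - s < j) by omega, if_false,
      show p - s + s = p by omega] at this
    exact this.symm
  set f := mark o e t z with hf
  set f' := mark o e t z' with hf'
  have f0 : ∀ p, 0 ≤ f p := mark_nonneg o e t z
  have f1 : ∀ p, f p ≤ 1 := mark_le_one o e t z
  have f0' : ∀ p, 0 ≤ f' p := mark_nonneg o e t z'
  have f1' : ∀ p, f' p ≤ 1 := mark_le_one o e t z'
  have h1 : ∀ p, p + t < i → f' p = f p := fun p hp =>
    mark_congr fun k hk => e1 _ (by omega)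
  have h2 : ∀ p, i ≤ p → p + t < j → f' p = f (p + s) := fun p hp hp' =>
    mark_congr fun k hk => by rw [e2 _ (by omega) (by omega)]; congr 1; omega
  have h3 : ∀ p, j + s ≤ p → f' p = f p := fun p hp =>
    mark_congr fun k hk => e3 _ (by omega)
  have d1 := weighted_diff (fun _ => 1) f f' t i j s m hge hjm h1 h2 h3
  have d2 := weighted_diff (fun p => (p : ℤ)) f f' t i j s m hge hjm h1 h2 h3
  simp only [one_mul, sub_self, zero_mul, Finset.sum_const_zero, add_zero] at d1
  have eN : ∑ p ∈ Finset.Ico i (j - t), ((p : ℤ) - ((p + s : ℕ) : ℤ)) * f (p + s)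
      = - (s : ℤ) * ∑ p ∈ Finset.Ico (i + s) (j - t + s), f p := by
    rw [← Finset.sum_Ico_add' f, Finset.mul_sum]
    refine Finset.sum_congr rfl fun p _ => ?_
    push_cast
    ring
  rw [eN] at d2
  have a1 := moment_bound f' f0' f1' (i : ℤ) t (i - t) i (fun p hp hp' => by rw [abs_le]; omega)
  have a2 := moment_bound f f0 f1 (i : ℤ) t (i - t) (i + s)
    (fun p hp hp' => by rw [abs_le]; omega)
  have a3 := moment_bound f' f0' f1' (j : ℤ) t (j - t) (j + s)
    (fun p hp hp' => by rw [abs_le]; omega)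
  have a4 := moment_bound f f0 f1 (j : ℤ) t (j - t + s) (j + s)
    (fun p hp hp' => by rw [abs_le]; omega)
  have b1 := sum_bound f' f0' f1' (i - t) i
  have b2 := sum_bound f f0 f1 (i - t) (i + s)
  have b3 := sum_bound f' f0' f1' (j - t) (j + s)
  have b4 := sum_bound f f0 f1 (j - t + s) (j + s)
  have bN := sum_bound f f0 f1 (i + s) (j - t + s)
  have sp := mark_spacing hoe t z (i + s) (j - t + s) (by omega)
  have dn := fun c => mark_dense hd c (i + s) (j - t + s)
  rw [← hf] at sp dn
  rw [d1] at hcount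
  rw [d2] at hsum
  clear d1 d2 eN
  generalize ∑ p ∈ Finset.Ico (i - t) i, f' p = l' at *
  generalize ∑ p ∈ Finset.Ico (i - t) (i + s), f p = l at *
  generalize ∑ p ∈ Finset.Ico (j - t) (j + s), f' p = r' at *
  generalize ∑ p ∈ Finset.Ico (j - t + s) (j + s), f p = r at *
  generalize ∑ p ∈ Finset.Ico (i + s) (j - t + s), f p = N at *
  generalize ∑ p ∈ Finset.Ico (i - t) i, (p : ℤ) * f' p = L' at *
  generalize ∑ p ∈ Finset.Ico (i - t) (i + s), (p : ℤ) * f p = L at *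
  generalize ∑ p ∈ Finset.Ico (j - t) (j + s), (p : ℤ) * f' p = R' at *
  generalize ∑ p ∈ Finset.Ico (j - t + s) (j + s), (p : ℤ) * f p = R at *
  have c0 : l' - l + (r' - r) = 0 := by
    refine Int.eq_zero_of_abs_lt_dvd hcount ?_
    rw [abs_lt]; omega
  obtain ⟨c, hc⟩ : ∃ c, c = r' - r := ⟨_, rfl⟩
  have hc' : l' - l = - c := by omega
  have hcb : |c| ≤ 2 * t := by rw [abs_le]; omega
  obtain ⟨v, hv⟩ : ∃ v : ℤ, v = (j : ℤ) - i := ⟨_, rfl⟩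
  have ht0 : (0 : ℤ) ≤ t := by omega
  have n1 : ((i - (i - t) : ℕ) : ℤ) * t ≤ t ^ 2 := by
    rw [pow_two]; exact mul_le_mul_of_nonneg_right (by omega) ht0
  have n2 : ((i + s - (i - t) : ℕ) : ℤ) * t ≤ 2 * t ^ 2 := by
    rw [pow_two, ← mul_assoc]; exact mul_le_mul_of_nonneg_right (by omega) ht0
  have n3 : ((j + s - (j - t) : ℕ) : ℤ) * t ≤ 2 * t ^ 2 := by
    rw [pow_two, ← mul_assoc]; exact mul_le_mul_of_nonneg_right (by omega) ht0
  have n4 : ((j + s - (j - t + s) : ℕ) : ℤ) * t ≤ t ^ 2 := by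
    rw [pow_two]; exact mul_le_mul_of_nonneg_right (by omega) ht0
  -- the exact error term of the change of the sum of positions
  obtain ⟨E, hE⟩ : ∃ E : ℤ, E = (L' - i * l') - (L - i * l) + (R' - j * r') - (R - j * r) :=
    ⟨_, rfl⟩
  have hEb : |E| ≤ 6 * t ^ 2 := by
    rw [abs_le] at a1 a2 a3 a4 ⊢
    constructor <;> linarith [a1.1, a2.1, a3.1, a4.1, a1.2, a2.2, a3.2, a4.2]
  have hD : L' - L + -(s : ℤ) * N + (R' - R) = c * v - s * N + E := by
    have : c * v = j * (r' - r) + i * (l' - l) := by rw [hc', ← hc, hv]; ring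
    rw [this, hE]; ring
  rw [hD] at hsum
  have hNm : N ≤ m := by omega
  have hsN : (s : ℤ) * N ≤ t * m := by
    apply mul_le_mul <;> omega
  have hsN0 : 0 ≤ (s : ℤ) * N := mul_nonneg (by omega) bN.1
  have hcv : |c * v| ≤ 2 * t * m := by
    rw [abs_mul]
    exact mul_le_mul hcb (by rw [abs_le]; omega) (abs_nonneg _) (by omega)
  have key : c * v - s * N + E = 0 := by
    refine Int.eq_zero_of_abs_lt_dvd hsum ?_
    rw [abs_le] at hcv hEb
    rw [abs_lt]
    constructor <;> linarith [hcv.1, hcv.2, hEb.1, hEb.2]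
  rw [abs_le] at hEb
  have hv0 : 0 ≤ v := by omega
  have hNs : N ≤ s * N := le_mul_of_one_le_left bN.1 (by omega)
  have hsNt : (s : ℤ) * N ≤ t * N := mul_le_mul_of_nonneg_right (by omega) bN.1
  have sp' : ((t : ℤ) + 1) * N ≤ v := by
    have : ((j - t + s : ℕ) : ℤ) - ((i + s : ℕ) : ℤ) + t = v := by omega
    linarith
  have concl : v ≤ 7 * ((t : ℤ) + 1) ^ 3 → j + s - i ≤ 20 * (t + 1) ^ 3 * δ := by
    intro h
    apply hbig
    have : ((j + s - i : ℕ) : ℤ) ≤ v + t := by omega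
    zify
    linarith [pow_nonneg ht0 3, pow_nonneg ht0 2]
  rcases lt_trichotomy c 0 with hneg | hzero | hpos
  · apply concl
    have : c * v ≤ -1 * v := mul_le_mul_of_nonneg_right (by omega) hv0
    linarith [pow_nonneg ht0 3, pow_nonneg ht0 2]
  · have hN6 : N ≤ 6 * t ^ 2 := by rw [hzero] at key; linarith
    by_contra hcon
    have hlen : 7 * (t + 1) ^ 2 * δ + 2 * t < j + s - i := by
      refine lt_of_le_of_lt ?_ (not_le.mp hcon)
      nlinarith [Nat.zero_le (t ^ 3 * δ), Nat.zero_le (t ^ 2 * δ), Nat.zero_le (t * δ), hδ,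
        Nat.mul_le_mul_left t hδ]
    have h6 : (6 * t ^ 2 + 1) * δ ≤ 7 * (t + 1) ^ 2 * δ :=
      Nat.mul_le_mul_right _ (by nlinarith)
    have := dn (6 * t ^ 2 + 1) (by omega) (by omega)
    push_cast at this
    linarith
  · apply concl
    have h1 : v ≤ c * v := le_mul_of_one_le_left hv0 hpos
    -- `v ≤ s N + 6 t²` and `(t + 1) s N ≤ t v`
    have h2 : v ≤ t * N + 6 * t ^ 2 := by linarith
    have h3 : ((t : ℤ) + 1) * v ≤ t * (((t : ℤ) + 1) * N) + 6 * t ^ 2 * (t + 1) := by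
      linarith [mul_le_mul_of_nonneg_left h2 (show (0 : ℤ) ≤ t + 1 by omega)]
    have h4 : (t : ℤ) * (((t : ℤ) + 1) * N) ≤ t * v := mul_le_mul_of_nonneg_left sp' ht0
    linarith [pow_nonneg ht0 3, pow_nonneg ht0 2]

/-! ### Greedy colouring of blocks -/

/-- Greedy colouring of a symmetric relation with at most `d` relatives per vertex. -/
lemma greedy_colouring {V : Type*} [Fintype V] (R : V → V → Prop)
    (symm : ∀ v w, R v w → R w v) (d : ℕ)
    (deg : ∀ v, ∃ S : Finset V, S.card ≤ d ∧ ∀ w, R v w → w ∈ S) :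
    ∃ f : V → Fin (d + 1), ∀ v w, v ≠ w → R v w → f v ≠ f w := by
  classical
  suffices h : ∀ T : Finset V, ∃ f : V → Fin (d + 1),
      ∀ v ∈ T, ∀ w ∈ T, v ≠ w → R v w → f v ≠ f w by
    obtain ⟨f, hf⟩ := h Finset.univ
    exact ⟨f, fun v w => hf v (Finset.mem_univ _) w (Finset.mem_univ _)⟩
  intro T
  induction T using Finset.induction_on with
  | empty => exact ⟨fun _ => 0, by simp⟩
  | insert x T hx ih =>
    obtain ⟨f, hf⟩ := ih
    obtain ⟨S, hS, hSR⟩ := deg x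
    obtain ⟨c, hc⟩ : ∃ c : Fin (d + 1), c ∉ S.image f := by
      by_contra! hcon
      have h1 : (Finset.univ : Finset (Fin (d + 1))) ⊆ S.image f := fun c _ => hcon c
      have h2 := Finset.card_le_card h1
      have h3 := Finset.card_image_le (s := S) (f := f)
      simp at h2
      omega
    have hc' : ∀ w, R x w → f w ≠ c := fun w hw h =>
      hc (Finset.mem_image.2 ⟨w, hSR w hw, h⟩)
    have hne : ∀ v ∈ T, v ≠ x := fun v hv h => hx (h ▸ hv)
    refine ⟨Function.update f x c, ?_⟩
    intro v hv w hw hvw hR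
    rcases Finset.mem_insert.1 hv with rfl | hv' <;> rcases Finset.mem_insert.1 hw with rfl | hw'
    · exact absurd rfl hvw
    · rw [Function.update_self, Function.update_of_ne (hne w hw')]
      exact (hc' w hR).symm
    · rw [Function.update_self, Function.update_of_ne (hne v hv')]
      exact hc' v (symm _ _ hR)
    · rw [Function.update_of_ne (hne v hv'), Function.update_of_ne (hne w hw')]
      exact hf v hv' w hw' hvw hR

/-- Two blocks of length `B` are confusable if deleting `s ≤ t` consecutive symbols from each can
give the same result. The blocks are prefixes of infinite words, so that `del` applies. -/
def Conf {A : Type*} (t B : ℕ) (c c' : Fin B → A) : Prop :=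
  ∃ s i j : ℕ, ∃ z z' : ℕ → A, s ≤ t ∧ i + s ≤ B ∧ j + s ≤ B ∧ (∀ k : Fin B, z k = c k) ∧
    (∀ k : Fin B, z' k = c' k) ∧ ∀ p, p + s < B → del z i s p = del z' j s p

/-- Number of colours that suffices for the confusability relation on blocks of length `B` over
an alphabet of size `Q`. -/
def numCol (t B Q : ℕ) : ℕ := (t + 1) * ((B + 1) * ((B + 1) * Q ^ t)) + 1

lemma exists_block_colouring {A : Type*} [Fintype A] (o : A) (t B : ℕ) :
    ∃ col : (Fin B → A) → Fin (numCol t B (Fintype.card A)),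
      ∀ c c', Conf t B c c' → col c = col c' → c = c' := by
  classical
  have symm : ∀ c c' : Fin B → A, Conf t B c c' → Conf t B c' c := by
    rintro c c' ⟨s, i, j, z, z', hs, hi, hj, hz, hz', h⟩
    exact ⟨s, j, i, z', z, hs, hj, hi, hz', hz, fun p hp => (h p hp).symm⟩
  suffices deg : ∀ c : Fin B → A, ∃ S : Finset (Fin B → A),
      S.card ≤ (t + 1) * ((B + 1) * ((B + 1) * Fintype.card A ^ t)) ∧ ∀ c', Conf t B c c' → c' ∈ S by
    obtain ⟨f, hf⟩ := greedy_colouring (Conf t B (A := A)) symm _ deg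
    refine ⟨f, fun c c' hc hcc => ?_⟩
    by_contra hne
    exact hf c c' hne hc hcc
  intro c
  -- a confusable block is determined by the two positions, the burst length and the lost symbols
  let zc : ℕ → A := fun p => if h : p < B then c ⟨p, h⟩ else o
  let rebuild : Fin (t + 1) × Fin (B + 1) × Fin (B + 1) × (Fin t → A) → (Fin B → A) :=
    fun x k => if (k : ℕ) < x.2.2.1 then del zc x.2.1 x.1 k
      else if (k : ℕ) < x.2.2.1 + x.1 then
        (if h : (k : ℕ) - x.2.2.1 < t then x.2.2.2 ⟨(k : ℕ) - x.2.2.1, h⟩ else o)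
      else del zc x.2.1 x.1 (k - x.1)
  refine ⟨Finset.univ.image rebuild, ?_, ?_⟩
  · refine Finset.card_image_le.trans ?_
    simp
  · rintro c' ⟨s, i, j, z, z', hs, hi, hj, hz, hz', h⟩
    have hzc : ∀ p, p < B → zc p = z p := fun p hp => by
      simp only [zc, hp, dif_pos]
      exact (hz ⟨p, hp⟩).symm
    have hdel : ∀ p, p + s < B → del zc i s p = del z i s p := by
      intro p hp
      unfold del
      split_ifs
      · exact hzc _ (by omega)
      · exact hzc _ hp
    refine Finset.mem_image.2 ⟨(⟨s, by omega⟩, ⟨i, by omega⟩, ⟨j, by omega⟩,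
      fun k => z' (j + k)), Finset.mem_univ _, ?_⟩
    funext k
    have hk := k.2
    simp only [rebuild]
    rw [← hz' k]
    split_ifs with h1 h2 h3
    · rw [hdel _ (by omega), h _ (by omega), del, if_pos h1]
    · congr 1; omega
    · omega
    · rw [hdel _ (by omega), h _ (by omega), del, if_neg (by omega)]
      congr 1; omega

/-- The block of length `B` of the infinite word `z` starting at position `a`. -/
def blk {A : Type*} (B : ℕ) (z : ℕ → A) (a : ℕ) : Fin B → A := fun k => z (a + k)

/-- Sum of the colours of the blocks of length `2 P` starting at `a₀, a₀ + 2 P, a₀ + 4 P, …`. -/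
def colSum {A : Type*} {K : ℕ} (P : ℕ) (col : (Fin (2 * P) → A) → Fin K) (m a₀ : ℕ)
    (z : ℕ → A) : ℕ :=
  ∑ b ∈ Finset.range m, (col (blk (2 * P) z (2 * P * b + a₀)) : ℕ)

lemma eq_of_colSum_aux {A : Type*} {K t P m i j s a₀ b : ℕ} {z z' : ℕ → A}
    (col : (Fin (2 * P) → A) → Fin K)
    (hcol : ∀ c c', Conf t (2 * P) c c' → col c = col c' → c = c')
    (hst : s ≤ t) (hij : i ≤ j) (hbm : b < m)
    (hi : 2 * P * b + a₀ ≤ i) (hj : j + s ≤ 2 * P * b + a₀ + 2 * P)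
    (hdel : ∀ p, del z i s p = del z' j s p)
    (hsum : colSum P col m a₀ z ≡ colSum P col m a₀ z' [MOD K]) : z = z' := by
  have hout : ∀ p, p < i ∨ j + s ≤ p → z p = z' p := by
    rintro p (hp | hp)
    · have := hdel p
      simpa only [del, hp, if_true, show p < j by omega] using this
    · have := hdel (p - s)
      simpa only [del, show ¬ (p - s < i) by omega, show ¬ (p - s < j) by omega, if_false,
        show p - s + s = p by omega] using this
  have hother : ∀ b' ∈ (Finset.range m).erase b,
      (col (blk (2 * P) z (2 * P * b' + a₀)) : ℕ) = col (blk (2 * P) z' (2 * P * b' + a₀)) := by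
    intro b' hb'
    have hne : b' ≠ b := (Finset.mem_erase.1 hb').1
    congr 2
    funext k
    have hk := k.2
    apply hout
    rcases Nat.lt_or_gt_of_ne hne with h | h
    · left
      have : 2 * P * (b' + 1) ≤ 2 * P * b := Nat.mul_le_mul_left _ h
      rw [Nat.mul_add] at this
      omega
    · right
      have : 2 * P * (b + 1) ≤ 2 * P * b' := Nat.mul_le_mul_left _ h
      rw [Nat.mul_add] at this
      omega
  unfold colSum at hsum
  rw [← Finset.add_sum_erase _ _ (Finset.mem_range.2 hbm),
    ← Finset.add_sum_erase _ _ (Finset.mem_range.2 hbm), Finset.sum_congr rfl hother] at hsum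
  have h1 := Nat.ModEq.add_right_cancel' _ hsum
  have h2 := Nat.ModEq.eq_of_lt_of_lt h1 (Fin.is_lt _) (Fin.is_lt _)
  have h3 : blk (2 * P) z (2 * P * b + a₀) = blk (2 * P) z' (2 * P * b + a₀) := by
    refine hcol _ _ ⟨s, i - (2 * P * b + a₀), j - (2 * P * b + a₀),
      fun k => z (2 * P * b + a₀ + k), fun k => z' (2 * P * b + a₀ + k), hst, by omega, by omega,
      fun _ => rfl, fun _ => rfl, fun p _ => ?_⟩ (Fin.ext h2)
    have := hdel (2 * P * b + a₀ + p)
    simp only [del] at this ⊢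
    simp only [← Nat.add_assoc, Nat.lt_sub_iff_add_lt']
    exact this
  funext p
  by_cases hp : p < i ∨ j + s ≤ p
  · exact hout p hp
  · have := congrFun h3 ⟨p - (2 * P * b + a₀), by omega⟩
    simp only [blk] at this
    rwa [Nat.add_sub_cancel' (by omega)] at this

/-- If `z` and `z'` differ by moving a burst inside a window of length `P` and the colour sums of
the two block partitions with offsets `0` and `P` agree, then `z = z'`: the window lies inside a
single block of one of the partitions. -/
lemma eq_of_colSum {A : Type*} {K t P m i j s : ℕ} {z z' : ℕ → A}
    (col : (Fin (2 * P) → A) → Fin K)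
    (hcol : ∀ c c', Conf t (2 * P) c c' → col c = col c' → c = c')
    (hP : 1 ≤ P) (hst : s ≤ t) (hs : 1 ≤ s) (hij : i ≤ j) (hjm : j + s ≤ m)
    (hlen : j + s - i ≤ P) (hdel : ∀ p, del z i s p = del z' j s p)
    (h0 : colSum P col m 0 z ≡ colSum P col m 0 z' [MOD K])
    (h1 : colSum P col m P z ≡ colSum P col m P z' [MOD K]) : z = z' := by
  have hb : i / (2 * P) < m := lt_of_le_of_lt (Nat.div_le_self _ _) (by omega)
  have hdiv := Nat.div_add_mod i (2 * P)
  have hmod := Nat.mod_lt i (show 0 < 2 * P by omega)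
  rcases Nat.lt_or_ge (i % (2 * P)) P with h | h
  · exact eq_of_colSum_aux col hcol hst hij hb (by omega) (by omega) hdel h0
  · exact eq_of_colSum_aux col hcol hst hij hb (by omega) (by omega) hdel h1

/-! ### Counting words with dense markers -/

/-- The finite word `w` continued by the letter `o`. -/
def ext {A : Type*} (o : A) {m : ℕ} (w : Fin m → A) (p : ℕ) : A :=
  if h : p < m then w ⟨p, h⟩ else o

/-- Every window of length `δ` of `w` holds a marker starting in it. -/
def Dense {A : Type*} (o e : A) (t δ : ℕ) {m : ℕ} (w : Fin m → A) : Prop :=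
  ∀ a, a + δ ≤ m → ∃ p, a ≤ p ∧ p < a + δ ∧ IsMark o e t (ext o w) p

/-- Bound for the number of words in which none of the `L` consecutive blocks of length `t + 1`
from position `a` on is the marker: each of these blocks misses at least one of its values. -/
lemma card_noMark {A : Type*} [Fintype A] (o e : A) (t L m a : ℕ) (ha : a + L * (t + 1) ≤ m)
    (S : Finset (Fin m → A))
    (hS : ∀ w ∈ S, ∀ l < L, ¬ IsMark o e t (ext o w) (a + l * (t + 1))) :
    S.card * (Fintype.card A ^ (t + 1)) ^ L
      ≤ (Fintype.card A ^ (t + 1) - 1) ^ L * Fintype.card A ^ m := by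
  classical
  let w0 : Fin (t + 1) → A := fun k => if (k : ℕ) = 0 then e else o
  let Φ : S → (Fin L → {g : Fin (t + 1) → A // g ≠ w0}) × (Fin a → A) ×
      (Fin (m - a - L * (t + 1)) → A) := fun w =>
    (fun l => ⟨fun k => ext o w.1 (a + l * (t + 1) + k), fun h => hS w.1 w.2 l l.2 (by
        refine ⟨?_, fun k hk hk' => ?_⟩
        · simpa [w0] using congrFun h 0
        · have := congrFun h ⟨k, by omega⟩
          simpa [w0, show k ≠ 0 by omega] using this)⟩,
      fun k => ext o w.1 k, fun k => ext o w.1 (a + L * (t + 1) + k))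
  have hinj : Function.Injective Φ := by
    intro w w' h
    apply Subtype.ext
    have h1 : ∀ p, ext o w.1 p = ext o w'.1 p := by
      simp only [Φ, Prod.mk.injEq] at h
      obtain ⟨h1, h2, h3⟩ := h
      intro p
      rcases Nat.lt_or_ge p a with hp | hp
      · exact congrFun h2 ⟨p, hp⟩
      rcases Nat.lt_or_ge p (a + L * (t + 1)) with hp' | hp'
      · have hl : (p - a) / (t + 1) < L := by
          rw [Nat.div_lt_iff_lt_mul (by omega)]; omega
        have h4 := congrFun (congrArg Subtype.val (congrFun h1 ⟨(p - a) / (t + 1), hl⟩))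
          ⟨(p - a) % (t + 1), Nat.mod_lt _ (by omega)⟩
        have h5 := Nat.div_add_mod' (p - a) (t + 1)
        simp only at h4
        rwa [Nat.add_assoc, h5, Nat.add_sub_cancel' hp] at h4
      rcases Nat.lt_or_ge p m with hp2 | hp2
      · have := congrFun h3 ⟨p - (a + L * (t + 1)), by omega⟩
        simp only at this
        rwa [Nat.add_sub_cancel' hp'] at this
      · simp [ext, show ¬ p < m by omega]
    funext k
    simpa [ext] using h1 k
  have hcard := Fintype.card_le_of_injective Φ hinj
  have hsub : Fintype.card {g : Fin (t + 1) → A // g ≠ w0} = Fintype.card A ^ (t + 1) - 1 := by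
    rw [Fintype.card_subtype_compl]; simp
  simp only [Fintype.card_coe, Fintype.card_prod, Fintype.card_pi, hsub, Finset.prod_const,
    Finset.card_univ, Fintype.card_fin] at hcard
  calc _ ≤ _ := Nat.mul_le_mul_right _ hcard
    _ = (Fintype.card A ^ (t + 1) - 1) ^ L *
        Fintype.card A ^ (a + (m - a - L * (t + 1)) + (t + 1) * L) := by
        rw [pow_add _ (a + _), pow_add _ a, ← pow_mul]; ring
    _ = _ := by
        congr 2
        rw [Nat.mul_comm (t + 1) L]; omega

open Classical in
/-- Union bound over the windows: at least half of all words have dense markers. -/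
lemma card_dense {A : Type*} [Fintype A] (o e : A) (t L m : ℕ) (hL : 1 ≤ L)
    (h : 2 * m * (Fintype.card A ^ (t + 1) - 1) ^ L ≤ (Fintype.card A ^ (t + 1)) ^ L) :
    Fintype.card A ^ m ≤
      2 * (Finset.univ.filter fun w : Fin m → A => Dense o e t (L * (t + 1)) w).card := by
  have hQ : 0 < Fintype.card A := Fintype.card_pos_iff.2 ⟨o⟩
  let bad : ℕ → Finset (Fin m → A) := fun a => Finset.univ.filter fun w =>
    a + L * (t + 1) ≤ m ∧ ∀ l < L, ¬ IsMark o e t (ext o w) (a + l * (t + 1))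
  have hbad : ∀ a, (bad a).card * (Fintype.card A ^ (t + 1)) ^ L
      ≤ (Fintype.card A ^ (t + 1) - 1) ^ L * Fintype.card A ^ m := by
    intro a
    by_cases ha : a + L * (t + 1) ≤ m
    · exact card_noMark o e t L m a ha _ fun w hw => (Finset.mem_filter.1 hw).2.2
    · have : bad a = ∅ := by simp [bad, ha]
      simp [this]
  have hcover : (Finset.univ.filter fun w : Fin m → A => ¬ Dense o e t (L * (t + 1)) w)
      ⊆ (Finset.range m).biUnion bad := by
    intro w hw
    replace hw := (Finset.mem_filter.1 hw).2
    unfold Dense at hw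
    push Not at hw
    obtain ⟨a, ha, hw⟩ := hw
    have h1 : 1 ≤ L * (t + 1) := Nat.mul_pos hL (by omega)
    refine Finset.mem_biUnion.2 ⟨a, by simp; omega, ?_⟩
    refine Finset.mem_filter.2 ⟨Finset.mem_univ _, ha, fun l hl => hw _ (by omega) ?_⟩
    have h2 : (l + 1) * (t + 1) ≤ L * (t + 1) := Nat.mul_le_mul_right _ hl
    rw [Nat.add_mul] at h2
    omega
  have h1 := Finset.card_le_card hcover
  have h2 := Finset.card_biUnion_le (s := Finset.range m) (t := bad)
  have h3 := Finset.card_filter_add_card_filter_not (s := (Finset.univ : Finset (Fin m → A)))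
    (fun w => Dense o e t (L * (t + 1)) w)
  have h4 : (Finset.univ : Finset (Fin m → A)).card = Fintype.card A ^ m := by simp
  rw [h4] at h3
  set g := (Finset.univ.filter fun w : Fin m → A => Dense o e t (L * (t + 1)) w).card
  set b := (Finset.univ.filter fun w : Fin m → A => ¬ Dense o e t (L * (t + 1)) w).card
  have h5 : b * (Fintype.card A ^ (t + 1)) ^ L
      ≤ m * ((Fintype.card A ^ (t + 1) - 1) ^ L * Fintype.card A ^ m) := by
    calc _ ≤ (∑ a ∈ Finset.range m, (bad a).card) * (Fintype.card A ^ (t + 1)) ^ L :=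
          Nat.mul_le_mul_right _ (h1.trans h2)
      _ = ∑ a ∈ Finset.range m, (bad a).card * (Fintype.card A ^ (t + 1)) ^ L :=
          Finset.sum_mul _ _ _
      _ ≤ ∑ a ∈ Finset.range m, (Fintype.card A ^ (t + 1) - 1) ^ L * Fintype.card A ^ m :=
          Finset.sum_le_sum fun a _ => hbad a
      _ = _ := by simp
  have h6 : 2 * b ≤ Fintype.card A ^ m := by
    have hpos : 0 < (Fintype.card A ^ (t + 1)) ^ L := by positivity
    refine Nat.le_of_mul_le_mul_right ?_ hpos
    have := Nat.mul_le_mul_right (Fintype.card A ^ m) h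
    nlinarith
  omega

/-! ### The code -/

/-- Number of classes into which the dense words of length `m` are divided, for blocks of length
`2 P` and an alphabet of size `Q`: marker count, sum of marker positions, two colour sums. -/
def numClasses (t m P Q : ℕ) : ℕ :=
  (4 * t + 1) * ((3 * t * m + 6 * t ^ 2 + 1) * (numCol t (2 * P) Q * numCol t (2 * P) Q))

/-- Pigeonhole: some class of dense words is large, and every class is a code correcting a burst
of at most `t` deletions. -/
lemma exists_code {A : Type*} [Fintype A] {o e : A} (hoe : o ≠ e) (t L m N : ℕ) (hL : 1 ≤ L)
    (hdense : 2 * m * (Fintype.card A ^ (t + 1) - 1) ^ L ≤ (Fintype.card A ^ (t + 1)) ^ L)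
    (hN : 2 * N * numClasses t m (20 * (t + 1) ^ 3 * (L * (t + 1))) (Fintype.card A)
      ≤ Fintype.card A ^ m) :
    ∃ C : Finset (Fin m → A), N ≤ C.card ∧ ∀ w ∈ C, ∀ w' ∈ C, ∀ s i j : ℕ, s ≤ t →
      i + s ≤ m → j + s ≤ m → (∀ p, del (ext o w) i s p = del (ext o w') j s p) → w = w' := by
  classical
  have hG := card_dense o e t L m hL hdense
  set δ := L * (t + 1) with hδ
  have hδ1 : 1 ≤ δ := Nat.mul_pos hL (by omega)
  set P := 20 * (t + 1) ^ 3 * δ with hP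
  have hP1 : 1 ≤ P := Nat.mul_pos (by positivity) hδ1
  obtain ⟨K, hK, col, hcol⟩ : ∃ K, K = numCol t (2 * P) (Fintype.card A) ∧
      ∃ col : (Fin (2 * P) → A) → Fin K, ∀ c c', Conf t (2 * P) c c' → col c = col c' → c = c' :=
    ⟨_, rfl, exists_block_colouring o t (2 * P)⟩
  have : NeZero K := ⟨by rw [hK]; unfold numCol; omega⟩
  set M := 3 * t * m + 6 * t ^ 2 + 1 with hM
  have : NeZero M := ⟨by omega⟩
  set G := Finset.univ.filter fun w : Fin m → A => Dense o e t δ w with hGdef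
  let Φ : (Fin m → A) → ZMod (4 * t + 1) × ZMod M × ZMod K × ZMod K := fun w =>
    (((∑ p ∈ Finset.range m, mark o e t (ext o w) p : ℤ) : ZMod (4 * t + 1)),
      ((∑ p ∈ Finset.range m, (p : ℤ) * mark o e t (ext o w) p : ℤ) : ZMod M),
      ((colSum P col m 0 (ext o w) : ℕ) : ZMod K), ((colSum P col m P (ext o w) : ℕ) : ZMod K))
  obtain ⟨y, -, hy⟩ := Finset.exists_le_card_fiber_of_mul_le_card_of_maps_to
    (s := G) (t := Finset.univ) (f := Φ) (n := N) (fun _ _ => Finset.mem_univ _)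
    ⟨0, Finset.mem_univ _⟩ (by
      rw [Finset.card_univ]
      simp only [Fintype.card_prod, ZMod.card]
      unfold numClasses at hN
      rw [← hK, ← hM] at hN
      nlinarith)
  refine ⟨_, hy, ?_⟩
  have key : ∀ w ∈ G, ∀ w' ∈ G, Φ w = Φ w' → ∀ s i j : ℕ, 1 ≤ s → s ≤ t → i ≤ j →
      j + s ≤ m → (∀ p, del (ext o w) i s p = del (ext o w') j s p) → w = w' := by
    intro w hw w' hw' hΦ s i j hs hst hij hjm hdel
    simp only [Φ, Prod.mk.injEq] at hΦ
    obtain ⟨h1, h2, h3, h4⟩ := hΦ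
    rw [ZMod.intCast_eq_intCast_iff_dvd_sub] at h1 h2
    rw [ZMod.natCast_eq_natCast_iff] at h3 h4
    have hlen := localize hoe hδ1 hs hst hij hjm hdel (Finset.mem_filter.1 hw).2
      (by exact_mod_cast h1) (by rw [hM] at h2; exact_mod_cast h2)
    have := eq_of_colSum col hcol hP1 hst hs hij hjm hlen hdel h3 h4
    funext k
    simpa [ext] using congrFun this k
  intro w hw w' hw' s i j hst hi hj hdel
  rw [Finset.mem_filter] at hw hw'
  rcases Nat.eq_zero_or_pos s with rfl | hs
  · funext k
    simpa [del, ext] using hdel k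
  rcases Nat.le_total i j with hij | hij
  · exact key w hw.1 w' hw'.1 (hw.2.trans hw'.2.symm) s i j hs hst hij hj hdel
  · exact (key w' hw'.1 w hw.1 (hw'.2.trans hw.2.symm) s j i hs hst hij hi
      fun p => (hdel p).symm).symm

/-! ### Parameters -/

/-- The constant in the bound of `numClasses` by a multiple of `n (log n)^8`. -/
def bigConst (t q : ℕ) : ℕ :=
  (4 * t + 1) * ((6 * t + 6 * t ^ 2 + 1) * ((t + 1) * ((40 * (t + 1) ^ 4 + 1) ^ 2 * q ^ t) + 1) ^ 2)

lemma numClasses_le (t q n m ℓ : ℕ) (hn : 1 ≤ n) (hℓ : 1 ≤ ℓ) (hm : m ≤ 2 * n) :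
    numClasses t m (20 * (t + 1) ^ 3 * (ℓ ^ 2 * (t + 1))) q ≤ bigConst t q * (n * ℓ ^ 8) := by
  have hℓ2 : 1 ≤ ℓ ^ 2 := Nat.one_le_pow _ _ hℓ
  have hℓ4 : 1 ≤ ℓ ^ 4 := Nat.one_le_pow _ _ hℓ
  have h1 : 3 * t * m + 6 * t ^ 2 + 1 ≤ (6 * t + 6 * t ^ 2 + 1) * n := by
    have := Nat.mul_le_mul_left (3 * t) hm
    have := Nat.mul_le_mul_left (6 * t ^ 2) hn
    nlinarith
  have h2 : 2 * (20 * (t + 1) ^ 3 * (ℓ ^ 2 * (t + 1))) + 1 ≤ (40 * (t + 1) ^ 4 + 1) * ℓ ^ 2 := by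
    have : 2 * (20 * (t + 1) ^ 3 * (ℓ ^ 2 * (t + 1))) = 40 * (t + 1) ^ 4 * ℓ ^ 2 := by ring
    rw [this, Nat.add_mul]; omega
  have h3 : numCol t (2 * (20 * (t + 1) ^ 3 * (ℓ ^ 2 * (t + 1)))) q
      ≤ ((t + 1) * ((40 * (t + 1) ^ 4 + 1) ^ 2 * q ^ t) + 1) * ℓ ^ 4 := by
    unfold numCol
    generalize 2 * (20 * (t + 1) ^ 3 * (ℓ ^ 2 * (t + 1))) + 1 = B at h2 ⊢
    generalize 40 * (t + 1) ^ 4 + 1 = c at h2 ⊢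
    calc (t + 1) * (B * (B * q ^ t)) + 1
        ≤ (t + 1) * (c * ℓ ^ 2 * (c * ℓ ^ 2 * q ^ t)) + ℓ ^ 4 := by gcongr
      _ = _ := by ring
  unfold numClasses bigConst
  calc _ ≤ (4 * t + 1) * (((6 * t + 6 * t ^ 2 + 1) * n) *
        ((((t + 1) * ((40 * (t + 1) ^ 4 + 1) ^ 2 * q ^ t) + 1) * ℓ ^ 4) *
        (((t + 1) * ((40 * (t + 1) ^ 4 + 1) ^ 2 * q ^ t) + 1) * ℓ ^ 4))) := by gcongr
    _ = _ := by ring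

/-- The hypothesis of `card_dense` holds for large `n` with `L = ℓ ^ 2`, `ℓ = ⌊log₂ n⌋`, and
`m ≤ 2 n`. -/
lemma eventually_dense (D : ℕ) (hD : 1 ≤ D) :
    ∃ ℓ₀ : ℕ, ∀ ℓ ≥ ℓ₀, ∀ n < 2 ^ (ℓ + 1), ∀ m ≤ 2 * n,
      2 * m * (D - 1) ^ (ℓ ^ 2) ≤ D ^ (ℓ ^ 2) := by
  have hD0 : (0 : ℝ) < D := by exact_mod_cast hD
  have hlt : ((D : ℝ) - 1) / D < 1 := by rw [div_lt_one hD0]; linarith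
  have h0 : 0 ≤ ((D : ℝ) - 1) / D := by
    have : (1 : ℝ) ≤ D := by exact_mod_cast hD
    apply div_nonneg <;> linarith
  have := (tendsto_pow_atTop_nhds_zero_of_lt_one h0 hlt).eventually
    (gt_mem_nhds (show (0 : ℝ) < 1 / 4 by norm_num))
  obtain ⟨ℓ₁, h1⟩ := Filter.eventually_atTop.1 this
  refine ⟨max ℓ₁ 3, fun ℓ hℓ n hn m hm => ?_⟩
  have hρ := (h1 ℓ (le_of_max_le_left hℓ)).le
  have h3 : 3 ≤ ℓ := le_of_max_le_right hℓ
  rw [div_pow, div_le_iff₀ (by positivity)] at hρ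
  -- `4 (D - 1)^ℓ ≤ D^ℓ`, raised to the power `ℓ`
  have h4 : 4 * (D - 1) ^ ℓ ≤ D ^ ℓ := by
    have : (4 : ℝ) * ((D : ℝ) - 1) ^ ℓ ≤ (D : ℝ) ^ ℓ := by linarith
    rw [← Nat.cast_one, ← Nat.cast_sub hD] at this
    exact_mod_cast this
  have h5 : 4 ^ ℓ * (D - 1) ^ (ℓ ^ 2) ≤ D ^ (ℓ ^ 2) := by
    have := Nat.pow_le_pow_left h4 ℓ
    rwa [mul_pow, ← pow_mul, ← pow_mul, ← pow_two] at this
  refine le_trans (Nat.mul_le_mul_right _ ?_) h5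
  have h6 : (4 : ℕ) ^ ℓ = 2 ^ ℓ * 2 ^ ℓ := by rw [← mul_pow]; norm_num
  have h7 : 2 ^ 3 ≤ 2 ^ ℓ := Nat.pow_le_pow_right (by norm_num) h3
  have h8 : (2 : ℕ) ^ (ℓ + 1) = 2 * 2 ^ ℓ := by ring
  have h9 := Nat.mul_le_mul_right (2 ^ ℓ) h7
  omega

/-- The redundancy `r = ⌊(log n + (8 + ε) log log n) / log q⌋` has `q ^ r` above any fixed multiple
of `n (log n)^8`. -/
lemma eventually_redundancy (q : ℕ) (hq : 2 ≤ q) (C : ℝ) (ε : ℝ) (hε : 0 < ε) :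
    ∃ n₀ : ℕ, ∀ n ≥ n₀, ∃ r : ℕ, r ≤ n ∧
      (r : ℝ) ≤ (Real.logb 2 n + (8 + ε) * Real.logb 2 (Real.logb 2 n)) / Real.logb 2 q ∧
      C * (n * (Nat.log 2 n : ℝ) ^ 8) ≤ (q : ℝ) ^ r := by
  have hlog : Filter.Tendsto (fun n : ℕ => Real.logb 2 n) Filter.atTop Filter.atTop :=
    (Real.tendsto_logb_atTop (by norm_num)).comp tendsto_natCast_atTop_atTop
  have e1 := hlog.eventually_ge_atTop 1
  have e2 := ((tendsto_rpow_atTop hε).comp hlog).eventually_ge_atTop (C * q)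
  have e3 : ∀ᶠ n : ℕ in Filter.atTop, (9 + ε) * Real.logb 2 n ≤ n := by
    have h := (Real.isLittleO_log_id_atTop.comp_tendsto
      (tendsto_natCast_atTop_atTop (R := ℝ))).def
      (show 0 < Real.log 2 / (9 + ε) from div_pos (Real.log_pos (by norm_num)) (by linarith))
    filter_upwards [h] with n hn
    simp only [Function.comp, id, Real.norm_eq_abs, Nat.abs_cast] at hn
    have h2 : (0 : ℝ) < Real.log 2 := Real.log_pos (by norm_num)
    have hn' := (le_abs_self _).trans hn
    have : (9 + ε) * Real.logb 2 n = (9 + ε) * Real.log n / Real.log 2 := by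
      rw [Real.logb]; ring
    rw [this, div_le_iff₀ h2]
    rw [div_mul_eq_mul_div, le_div_iff₀ (by linarith)] at hn'
    linarith
  obtain ⟨n₀, hn₀⟩ := Filter.eventually_atTop.1
    ((e1.and e2).and (e3.and (Filter.eventually_ge_atTop 1)))
  refine ⟨n₀, fun n hn => ?_⟩
  obtain ⟨⟨h1, h2⟩, h3, h4⟩ := hn₀ n hn
  simp only [Function.comp] at h2
  set x := Real.logb 2 n with hx
  have hx0 : 0 < x := by linarith
  have hn0 : (0 : ℝ) < n := by exact_mod_cast h4
  have hq0 : (0 : ℝ) < q := by positivity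
  have hq1 : 1 ≤ Real.logb 2 q := by
    rw [Real.le_logb_iff_rpow_le (by norm_num) hq0]
    simpa using (by exact_mod_cast hq : (2 : ℝ) ≤ q)
  set X := x + (8 + ε) * Real.logb 2 x with hX
  have hlx : 0 ≤ Real.logb 2 x := Real.logb_nonneg (by norm_num) h1
  have hX0 : 0 ≤ X := by positivity
  have hlx' : Real.logb 2 x ≤ x := by
    rw [Real.logb_le_iff_le_rpow (by norm_num) hx0]
    -- `x ≤ 2 ^ x` for `x = log₂ n` amounts to `log₂ n ≤ n`
    rw [hx, Real.rpow_logb (by norm_num) (by norm_num) hn0]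
    nlinarith
  have hXn : X ≤ n := by nlinarith
  have hd0 : 0 ≤ X / Real.logb 2 q := by positivity
  refine ⟨⌊X / Real.logb 2 q⌋₊, ?_, Nat.floor_le hd0, ?_⟩
  · have : (⌊X / Real.logb 2 q⌋₊ : ℝ) ≤ n :=
      (Nat.floor_le hd0).trans ((div_le_self hX0 hq1).trans hXn)
    exact_mod_cast this
  · have hq2 : (1 : ℝ) < q := by exact_mod_cast hq
    have hpow : (q : ℝ) ^ (X / Real.logb 2 q) = n * x ^ (8 + ε) := by
      have : (q : ℝ) = 2 ^ Real.logb 2 q := (Real.rpow_logb (by norm_num) (by norm_num) hq0).symm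
      conv_lhs => rw [this]
      rw [← Real.rpow_mul (by norm_num), Real.logb_rpow (by norm_num) (by norm_num),
        mul_div_cancel₀ _ (by linarith), hX, Real.rpow_add (by norm_num),
        mul_comm (8 + ε), Real.rpow_mul (by norm_num), Real.rpow_logb (by norm_num) (by norm_num) hx0,
        hx, Real.rpow_logb (by norm_num) (by norm_num) hn0]
    have hfl := Nat.lt_floor_add_one (X / Real.logb 2 q)
    have h5 : (q : ℝ) ^ (X / Real.logb 2 q) ≤ (q : ℝ) ^ ⌊X / Real.logb 2 q⌋₊ * q := by
      rw [← pow_succ, ← Real.rpow_natCast]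
      apply Real.rpow_le_rpow_of_exponent_le hq2.le
      push_cast
      exact hfl.le
    rw [hpow, Real.rpow_add hx0] at h5
    have hℓ : (Nat.log 2 n : ℝ) ≤ x := Real.natLog_le_logb n 2
    have h6 : (Nat.log 2 n : ℝ) ^ 8 ≤ x ^ (8 : ℝ) := by
      have : x ^ (8 : ℝ) = x ^ (8 : ℕ) := by exact_mod_cast Real.rpow_natCast x 8
      rw [this]
      exact pow_le_pow_left₀ (by positivity) hℓ 8
    have hℓ0 : (0 : ℝ) ≤ (Nat.log 2 n : ℝ) ^ 8 := by positivity
    refine le_of_mul_le_mul_right ?_ hq0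
    calc C * (n * (Nat.log 2 n : ℝ) ^ 8) * q = (n * (Nat.log 2 n : ℝ) ^ 8) * (C * q) := by ring
      _ ≤ (n * (Nat.log 2 n : ℝ) ^ 8) * x ^ ε := by gcongr
      _ ≤ (n * x ^ (8 : ℝ)) * x ^ ε := by gcongr
      _ = n * (x ^ (8 : ℝ) * x ^ ε) := by ring
      _ ≤ _ := h5

/-! ### Lists -/

lemma getElem?_delete (x : List ℕ) (i s p : ℕ) (h : i + s ≤ x.length) :
    (x.take i ++ x.drop (i + s))[p]? = del (fun p => x[p]?) i s p := by
  have hl : (x.take i).length = i := by simp; omega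
  unfold del
  split_ifs with hp
  · rw [List.getElem?_append_left (by omega), List.getElem?_take_of_lt hp]
  · rw [List.getElem?_append_right (by omega), hl, List.getElem?_drop]
    congr 1; omega

/-- A common result of burst deletions from two lists of the same length `m`, in terms of `del`. -/
lemma burst_common {q m t : ℕ} (o : Fin q) (ho : (o : ℕ) = 0) (w w' : Fin m → Fin q)
    (h : (burstLe t (List.ofFn fun k => (w k : ℕ)) ∩
      burstLe t (List.ofFn fun k => (w' k : ℕ))).Nonempty) :
    ∃ s i j, s ≤ t ∧ i + s ≤ m ∧ j + s ≤ m ∧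
      ∀ p, del (ext o w) i s p = del (ext o w') j s p := by
  obtain ⟨y, ⟨s, hs, i, hi, hy⟩, ⟨s', hs', j, hj, hy'⟩⟩ := h
  have hlen := congrArg List.length hy
  have hlen' := congrArg List.length hy'
  simp only [List.length_append, List.length_take, List.length_drop, List.length_ofFn] at hlen hlen' hi hj
  obtain rfl : s = s' := by omega
  refine ⟨s, i, j, hs, hi, hj, fun p => ?_⟩
  have hext : ∀ (w : Fin m → Fin q) p,
      ((ext o w p : Fin q) : ℕ) = ((List.ofFn fun k => (w k : ℕ))[p]?).getD 0 := by
    intro w p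
    unfold ext
    split_ifs with hp <;> simp [hp, ho]
  have hp : ∀ (x : Fin m → Fin q) (i : ℕ), ((del (ext o x) i s p : Fin q) : ℕ) =
      (del (fun p => (List.ofFn fun k => (x k : ℕ))[p]?) i s p).getD 0 := by
    intro x i
    unfold del
    split_ifs <;> exact hext _ _
  apply Fin.ext
  rw [hp, hp, ← getElem?_delete _ _ _ _ (by simpa using hi),
    ← getElem?_delete _ _ _ _ (by simpa using hj), ← hy, ← hy']

end BurstCode

/-- main theorem: for fixed `q > 2`, `t ≥ 1` and `ε > 0`,
for all large enough `n` there are a length `m` with redundancy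
`m − (n−1) ≤ (log₂ n + (8+ε)·log₂ log₂ n)/log₂ q` symbols and an injective
encoder `E : Σ_q^{n−1} → Σ_q^m` whose image is a code correcting any burst
of at most `t` deletions. -/
theorem exists_burst_correcting_code
    (q t : ℕ) (ε : ℝ) (hq : 2 < q) (ht : 1 ≤ t) (hε : 0 < ε) :
    ∃ n₀ : ℕ, ∀ n ≥ n₀, ∃ m : ℕ, ∃ E : List ℕ → List ℕ,
      ((m : ℝ) - ((n : ℝ) - 1)
          ≤ (Real.logb 2 n + (8 + ε) * Real.logb 2 (Real.logb 2 n)) /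
              Real.logb 2 q) ∧
      (∀ u : List ℕ, u.length = n - 1 → (∀ a ∈ u, a < q) →
        (E u).length = m ∧ ∀ a ∈ E u, a < q) ∧
      (∀ u u' : List ℕ, u.length = n - 1 → (∀ a ∈ u, a < q) →
        u'.length = n - 1 → (∀ a ∈ u', a < q) →
        E u = E u' → u = u') ∧
      (∀ u u' : List ℕ, u.length = n - 1 → (∀ a ∈ u, a < q) →
        u'.length = n - 1 → (∀ a ∈ u', a < q) →
        (burstLe t (E u) ∩ burstLe t (E u')).Nonempty → E u = E u') := by
  have hq0 : 0 < q := by omega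
  obtain ⟨ℓ₀, hℓ₀⟩ := BurstCode.eventually_dense (q ^ (t + 1)) (Nat.one_le_pow _ _ hq0)
  obtain ⟨n₁, hn₁⟩ := BurstCode.eventually_redundancy q (by omega)
    ((2 * BurstCode.bigConst t q : ℕ) : ℝ) ε hε
  refine ⟨max n₁ (2 ^ (ℓ₀ + 1)), fun n hn => ?_⟩
  obtain ⟨r, hrn, hr, hC⟩ := hn₁ n (le_of_max_le_left hn)
  have hn2 : 2 ^ (ℓ₀ + 1) ≤ n := le_of_max_le_right hn
  have hn1 : 1 ≤ n := le_trans (Nat.one_le_two_pow) hn2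
  have hℓ : ℓ₀ + 1 ≤ Nat.log 2 n := Nat.le_log_of_pow_le (by norm_num) hn2
  set ℓ := Nat.log 2 n with hℓdef
  set m := n - 1 + r with hm
  have hC' : 2 * BurstCode.bigConst t q * (n * ℓ ^ 8) ≤ q ^ r := by exact_mod_cast hC
  have hcl := BurstCode.numClasses_le t q n m ℓ hn1 (by omega) (by omega)
  have hoe : (⟨0, hq0⟩ : Fin q) ≠ ⟨1, by omega⟩ := by simp
  obtain ⟨C, hCcard, hCcode⟩ := BurstCode.exists_code hoe t (ℓ ^ 2) m (q ^ (n - 1))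
    (Nat.one_le_pow _ _ (by omega))
    (by
      rw [Fintype.card_fin]
      exact hℓ₀ ℓ (by omega) n (Nat.lt_pow_succ_log_self (by norm_num) n) m (by omega))
    (by
      rw [Fintype.card_fin, hm, pow_add]
      calc _ ≤ 2 * q ^ (n - 1) * (BurstCode.bigConst t q * (n * ℓ ^ 8)) :=
            Nat.mul_le_mul_left _ hcl
        _ = q ^ (n - 1) * (2 * BurstCode.bigConst t q * (n * ℓ ^ 8)) := by ring
        _ ≤ _ := Nat.mul_le_mul_left _ hC')
  obtain ⟨g⟩ : Nonempty ((Fin (n - 1) → Fin q) ↪ C) :=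
    Function.Embedding.nonempty_of_card_le (by simpa using hCcard)
  let toW : List ℕ → (Fin (n - 1) → Fin q) := fun u k => ⟨u.getD k 0 % q, Nat.mod_lt _ hq0⟩
  have htoW : ∀ u u' : List ℕ, u.length = n - 1 → (∀ a ∈ u, a < q) →
      u'.length = n - 1 → (∀ a ∈ u', a < q) → toW u = toW u' → u = u' := by
    intro u u' hu hua hu' hua' h
    refine List.ext_getElem (hu.trans hu'.symm) fun k hk hk' => ?_
    have := congrArg Fin.val (congrFun h ⟨k, by omega⟩)
    simpa [toW, hk, hk', Nat.mod_eq_of_lt (hua _ (List.getElem_mem hk)),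
      Nat.mod_eq_of_lt (hua' _ (List.getElem_mem hk'))] using this
  refine ⟨m, fun u => List.ofFn fun k => (((g (toW u)).1 k : Fin q) : ℕ), ?_, ?_, ?_, ?_⟩
  · have : (m : ℝ) - ((n : ℝ) - 1) = r := by
      rw [hm, Nat.cast_add, Nat.cast_sub hn1]; push_cast; ring
    rw [this]
    exact hr
  · intro u _ _
    refine ⟨List.length_ofFn, fun a ha => ?_⟩
    obtain ⟨k, rfl⟩ := (List.mem_ofFn' _ _).1 ha
    exact Fin.is_lt _
  · intro u u' hu hua hu' hua' h
    refine htoW u u' hu hua hu' hua' (g.injective (Subtype.ext ?_))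
    funext k
    exact Fin.ext (congrFun (List.ofFn_injective h) k)
  · intro u u' _ _ _ _ h
    obtain ⟨s, i, j, hs, hi, hj, hdel⟩ := BurstCode.burst_common ⟨0, hq0⟩ rfl _ _ h
    have := hCcode _ (g (toW u)).2 _ (g (toW u')).2 s i j hs hi hj hdel
    simp only [this]
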